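/- arXiv:math/0702156 — 2 statements merged into one kernel-verified Lean document; each statement's English description precedes it below -/
import Mathlib

section
/- Let p ≥ 7 be an odd integer. For every real number b there exist ε > 0 and a function u, real-analytic on (1−ε, 1+ε), with u(1) = b, satisfying the self-similar profile equation (1−ρ²)u''(ρ) + (2/ρ − (2+2α)ρ)u'(ρ) − α(α+1)u(ρ) + u(ρ)^p = 0 for all ρ ∈ (1−ε, 1+ε) with ρ ≠ 1. Moreover, every function u that is real-analytic at ρ = 1 and satisfies the equation on a punctured neighborhood of ρ = 1 necessarily has u'(1) = (p−1)·u(1)^p/4 − (p+1)·u(1)/(2(p−1)). -/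
open Set Real Filter

/-- The exponent `α = 2/(p-1)`. -/
noncomputable def alphaP (p : ℕ) : ℝ := 2 / ((p : ℝ) - 1)

/-- `b₀ = (2(p+1)/(p-1)²)^(1/(p-1))`, the constant solution. -/
noncomputable def bZero (p : ℕ) : ℝ :=
  (2 * ((p : ℝ) + 1) / ((p : ℝ) - 1) ^ 2) ^ ((1 : ℝ) / ((p : ℝ) - 1))

/-- `b∞ = (2(p-3)/(p-1)²)^(1/(p-1))`. -/
noncomputable def bInfty (p : ℕ) : ℝ :=
  (2 * ((p : ℝ) - 3) / ((p : ℝ) - 1) ^ 2) ^ ((1 : ℝ) / ((p : ℝ) - 1))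

/-- The singular static solution `u∞(ρ) = b∞ ρ^(-α)`. -/
noncomputable def uInfty (p : ℕ) (ρ : ℝ) : ℝ := bInfty p * ρ ^ (-(alphaP p))

/-- The self-similar profile equation
`(1-ρ²)u'' + (2/ρ - (2+2α)ρ)u' - α(α+1)u + u^p = 0` at the point `ρ`. -/
def ProfileEq (p : ℕ) (u : ℝ → ℝ) (ρ : ℝ) : Prop :=
  (1 - ρ ^ 2) * deriv (deriv u) ρ + (2 / ρ - (2 + 2 * alphaP p) * ρ) * deriv u ρ
    - alphaP p * (alphaP p + 1) * u ρ + u ρ ^ p = 0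

/-!
Divided by `-(1 + ρ)`, the profile equation reads `(ρ - 1) u'' + q(ρ) u' = F(ρ, u)`, where `q` is
analytic near `1`, `F` is polynomial in `u` with coefficients analytic in `ρ`, and `q(1) = α > 0`.
The Taylor coefficients of a solution at `1` satisfy `(n + 1) (n + α) uₙ₊₁ = …`, the right-hand
side involving only `u₀, …, uₙ`, so `u₀ = b` determines a unique formal solution.

It converges because division by `n + α` is bounded in the weighted norm `‖f‖ = ∑ ‖fₙ‖ rⁿ`,
which is submultiplicative also when truncated at order `N`: for small `r`, the bound
`r ‖u'‖ ≤ 1` on the truncation at `N` controls the right-hand side on the truncation at `N + 1`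
and hence propagates. Finally, letting `ρ → 1` in the equation removes the `u''` term and leaves
a linear equation for `u'(1)`.
-/

open Finset PowerSeries
open scoped Topology

section Formal

theorem X_pow_dvd_X_mul_derivative {R : Type*} [CommSemiring R] {n : ℕ} {f : R⟦X⟧}
    (h : X ^ n ∣ f) : X ^ n ∣ X * d⁄dX R f := by
  rw [X_pow_dvd_iff] at h ⊢
  rintro (_ | m) hm
  · simp
  · rw [coeff_succ_X_mul, coeff_derivative, h _ hm, zero_mul]

theorem eq_of_forall_X_pow_dvd_sub {R : Type*} [Ring R] {f g : R⟦X⟧}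
    (h : ∀ n, X ^ n ∣ f - g) : f = g := by
  ext n
  simpa only [map_sub, sub_eq_zero] using X_pow_dvd_iff.1 (h (n + 1)) n n.lt_succ_self

theorem exists_forall_X_pow_dvd_sub {R : Type*} [Ring R] {φ : ℕ → R⟦X⟧}
    (h : ∀ n, X ^ n ∣ φ (n + 1) - φ n) : ∃ f, ∀ n, X ^ n ∣ f - φ n := by
  have hstable (n k : ℕ) : X ^ n ∣ φ (n + k) - φ n := by
    induction k with
    | zero => simp
    | succ k ih =>
      rw [← add_assoc, ← sub_add_sub_cancel _ (φ (n + k))]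
      exact dvd_add ((pow_dvd_pow X (n.le_add_right k)).trans (h (n + k))) ih
  refine ⟨mk fun k => coeff k (φ (k + 1)), fun n => X_pow_dvd_iff.2 fun k hk => ?_⟩
  obtain ⟨m, rfl⟩ := Nat.exists_eq_add_of_le (Nat.succ_le_of_lt hk)
  have := X_pow_dvd_iff.1 (hstable (k + 1) m) k k.lt_succ_self
  rw [map_sub, sub_eq_zero] at this
  rw [map_sub, coeff_mk, Nat.succ_eq_add_one, this, sub_self]

theorem exists_eq_C_add_X_mul {R : Type*} [Ring R] (b : R) {Ψ : R⟦X⟧ → R⟦X⟧}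
    (hΨ : ∀ n f g, X ^ n ∣ f - g → X ^ n ∣ Ψ f - Ψ g) : ∃ f, f = C b + X * Ψ f := by
  set T : R⟦X⟧ → R⟦X⟧ := fun f => C b + X * Ψ f with hT
  have hcontr (n : ℕ) (f g : R⟦X⟧) (h : X ^ n ∣ f - g) : X ^ (n + 1) ∣ T f - T g := by
    rw [hT, add_sub_add_left_eq_sub, ← mul_sub, pow_succ']
    exact mul_dvd_mul_left X (hΨ n f g h)
  have hstep (n : ℕ) : X ^ n ∣ T^[n + 1] 0 - T^[n] 0 := by
    induction n with
    | zero => simp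
    | succ n ih => simpa only [Function.iterate_succ_apply'] using hcontr n _ _ ih
  obtain ⟨f, hf⟩ := exists_forall_X_pow_dvd_sub (φ := fun n => T^[n] 0) hstep
  refine ⟨f, eq_of_forall_X_pow_dvd_sub fun n => (pow_dvd_pow X n.le_succ).trans ?_⟩
  rw [← sub_sub_sub_cancel_right _ _ (T^[n + 1] 0)]
  refine dvd_sub (hf (n + 1)) ?_
  rw [Function.iterate_succ_apply']
  exact hcontr n _ _ (hf n)

theorem coeff_X_mul_derivative_derivative {R : Type*} [CommSemiring R] (f : R⟦X⟧) (n : ℕ) :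
    coeff n (X * d⁄dX R (d⁄dX R f)) = n * coeff n (d⁄dX R f) := by
  cases n with
  | zero => simp
  | succ n => rw [coeff_succ_X_mul, coeff_derivative _ n, mul_comm, Nat.cast_succ]

theorem X_mul_derivative_derivative_add_eq_iff {R : Type*} [CommRing R] {Q f g : R⟦X⟧} :
    X * d⁄dX R (d⁄dX R f) + Q * d⁄dX R f = g ↔
      ∀ n : ℕ, (n + constantCoeff Q) * coeff n (d⁄dX R f) =
        coeff n (g - (mk fun k => coeff (k + 1) Q) * (X * d⁄dX R f)) := by
  have hsplit : Q * d⁄dX R f =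
      C (constantCoeff Q) * d⁄dX R f + (mk fun k => coeff (k + 1) Q) * (X * d⁄dX R f) := by
    conv_lhs => rw [eq_X_mul_shift_add_const Q]
    ring
  rw [hsplit, ← add_assoc, ← eq_sub_iff_add_eq, PowerSeries.ext_iff]
  simp only [map_add, coeff_X_mul_derivative_derivative, coeff_C_mul, add_mul]

theorem X_pow_dvd_sum_mul_pow_sub {R : Type*} [CommRing R] (P : R⟦X⟧) (s : Finset ℕ)
    (G : ℕ → R⟦X⟧) {n : ℕ} {f g : R⟦X⟧} (h : X ^ n ∣ f - g) :
    X ^ n ∣ (∑ j ∈ s, G j * f ^ j - P * (X * d⁄dX R f)) -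
      (∑ j ∈ s, G j * g ^ j - P * (X * d⁄dX R g)) := by
  have hpow : X ^ n ∣ ∑ j ∈ s, G j * f ^ j - ∑ j ∈ s, G j * g ^ j := by
    rw [← sum_sub_distrib]
    refine Finset.dvd_sum fun j _ => ?_
    rw [← mul_sub]
    exact (h.trans (sub_dvd_pow_sub_pow f g j)).mul_left _
  have hder : X ^ n ∣ P * (X * d⁄dX R f) - P * (X * d⁄dX R g) := by
    rw [← mul_sub, ← mul_sub, ← map_sub]
    exact (X_pow_dvd_X_mul_derivative h).mul_left P
  rw [sub_sub_sub_comm]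
  exact dvd_sub hpow hder

theorem exists_powerSeries_regularSingular_solution {K : Type*} [Field K] [CharZero K] {Q : K⟦X⟧}
    (hQ : ∀ n : ℕ, (n : K) + constantCoeff Q ≠ 0) (s : Finset ℕ) (G : ℕ → K⟦X⟧) (b : K) :
    ∃ f : K⟦X⟧, constantCoeff f = b ∧
      X * d⁄dX K (d⁄dX K f) + Q * d⁄dX K f = ∑ j ∈ s, G j * f ^ j := by
  set Φ : K⟦X⟧ → K⟦X⟧ := fun f =>
    ∑ j ∈ s, G j * f ^ j - (mk fun k => coeff (k + 1) Q) * (X * d⁄dX K f)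
  obtain ⟨f, hf⟩ := exists_eq_C_add_X_mul b
    (Ψ := fun f => mk fun n => coeff n (Φ f) / ((n + 1) * (n + constantCoeff Q)))
    fun n f g h => X_pow_dvd_iff.2 fun k hk => by
      have hΦ : coeff k (Φ f - Φ g) = 0 :=
        X_pow_dvd_iff.1 (X_pow_dvd_sum_mul_pow_sub _ s G h) k hk
      rw [map_sub, coeff_mk, coeff_mk, ← sub_div, ← map_sub, hΦ, zero_div]
  refine ⟨f, by rw [hf]; simp, X_mul_derivative_derivative_add_eq_iff.2 fun n => ?_⟩
  have hcoeff : coeff (n + 1) f = coeff n (Φ f) / ((n + 1) * (n + constantCoeff Q)) := by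
    conv_lhs => rw [hf]
    simp [coeff_succ_X_mul]
  have hn : (n : K) + 1 ≠ 0 := n.cast_add_one_ne_zero
  rw [coeff_derivative, hcoeff, ← div_div, div_mul_eq_mul_div, div_mul_cancel₀ _ hn]
  exact mul_div_cancel₀ _ (hQ n)

end Formal

section Norm

/-- The partial sum `∑_{n < N} ‖fₙ‖ rⁿ` of the weighted `ℓ¹` norm of a formal power series. -/
noncomputable def truncNorm {R : Type*} [NormedRing R] (r : ℝ) (N : ℕ) (f : R⟦X⟧) : ℝ :=
  ∑ n ∈ range N, ‖coeff n f‖ * r ^ n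

/-- A formal power series over a normed ring has positive radius of convergence, expressed by
absolute convergence at some positive radius. -/
def HasPositiveRadius {R : Type*} [NormedRing R] (f : R⟦X⟧) : Prop :=
  ∃ r : ℝ, 0 < r ∧ Summable fun n => ‖coeff n f‖ * r ^ n

section NormedRing

variable {R : Type*} [NormedRing R] {r : ℝ}

theorem truncNorm_nonneg (hr : 0 ≤ r) (N : ℕ) (f : R⟦X⟧) : 0 ≤ truncNorm r N f :=
  sum_nonneg fun _ _ => by positivity

theorem truncNorm_sub_le (hr : 0 ≤ r) (N : ℕ) (f g : R⟦X⟧) :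
    truncNorm r N (f - g) ≤ truncNorm r N f + truncNorm r N g := by
  rw [truncNorm, truncNorm, truncNorm, ← sum_add_distrib]
  refine sum_le_sum fun n _ => ?_
  rw [map_sub, ← add_mul]
  gcongr
  exact norm_sub_le _ _

theorem truncNorm_sum_le (hr : 0 ≤ r) (N : ℕ) {ι : Type*} (s : Finset ι) (f : ι → R⟦X⟧) :
    truncNorm r N (∑ i ∈ s, f i) ≤ ∑ i ∈ s, truncNorm r N (f i) := by
  simp only [truncNorm]
  rw [sum_comm]
  refine sum_le_sum fun n _ => ?_
  rw [map_sum, ← sum_mul]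
  gcongr
  exact norm_sum_le _ _

theorem norm_coeff_mul_mul_pow_le (hr : 0 ≤ r) (f g : R⟦X⟧) (n : ℕ) :
    ‖coeff n (f * g)‖ * r ^ n ≤ ∑ k ∈ range (n + 1),
      ‖coeff k f‖ * r ^ k * (‖coeff (n - k) g‖ * r ^ (n - k)) := by
  rw [coeff_mul, ← Nat.succ_eq_add_one, ← Finset.Nat.sum_antidiagonal_eq_sum_range_succ
    fun i j => ‖coeff i f‖ * r ^ i * (‖coeff j g‖ * r ^ j)]
  refine (mul_le_mul_of_nonneg_right (norm_sum_le _ _) (by positivity)).trans ?_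
  rw [sum_mul]
  refine sum_le_sum fun ij hij => ?_
  rw [← mem_antidiagonal.1 hij, pow_add, mul_mul_mul_comm]
  gcongr
  exact norm_mul_le _ _

theorem truncNorm_mul_le (hr : 0 ≤ r) (N : ℕ) (f g : R⟦X⟧) :
    truncNorm r N (f * g) ≤ truncNorm r N f * truncNorm r N g :=
  calc truncNorm r N (f * g)
      ≤ ∑ n ∈ range N, ∑ k ∈ range (n + 1),
          ‖coeff k f‖ * r ^ k * (‖coeff (n - k) g‖ * r ^ (n - k)) :=
        sum_le_sum fun n _ => norm_coeff_mul_mul_pow_le hr f g n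
    _ = ∑ i ∈ range N, ∑ j ∈ range (N - i), ‖coeff i f‖ * r ^ i * (‖coeff j g‖ * r ^ j) :=
        sum_range_diag_flip N fun i j => ‖coeff i f‖ * r ^ i * (‖coeff j g‖ * r ^ j)
    _ ≤ ∑ i ∈ range N, ∑ j ∈ range N, ‖coeff i f‖ * r ^ i * (‖coeff j g‖ * r ^ j) := by
        gcongr
        exact Nat.sub_le N _
    _ = truncNorm r N f * truncNorm r N g := (sum_mul_sum ..).symm

theorem truncNorm_pow_le [NormOneClass R] (hr : 0 ≤ r) (N : ℕ) (f : R⟦X⟧) (j : ℕ) :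
    truncNorm r N (f ^ j) ≤ truncNorm r N f ^ j := by
  induction j with
  | zero => cases N <;> simp [truncNorm, coeff_one, sum_range_succ']
  | succ j ih =>
    rw [pow_succ, pow_succ]
    refine (truncNorm_mul_le hr N _ _).trans ?_
    gcongr
    exact truncNorm_nonneg hr N f

theorem truncNorm_le_mul_of_coeff_eq_mul {M : ℝ} (hr : 0 ≤ r) {w : ℕ → R} (hM : ∀ n, ‖w n‖ ≤ M)
    {f g : R⟦X⟧} (h : ∀ n, coeff n f = w n * coeff n g) (N : ℕ) :
    truncNorm r N f ≤ M * truncNorm r N g := by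
  rw [truncNorm, truncNorm, mul_sum]
  refine sum_le_sum fun n _ => ?_
  rw [h n, ← mul_assoc]
  gcongr
  exact (norm_mul_le _ _).trans (mul_le_mul_of_nonneg_right (hM n) (norm_nonneg _))

theorem truncNorm_succ_X_mul (r : ℝ) (N : ℕ) (f : R⟦X⟧) :
    truncNorm r (N + 1) (X * f) = r * truncNorm r N f := by
  rw [truncNorm, truncNorm, sum_range_succ', mul_sum]
  simp [coeff_succ_X_mul, pow_succ', mul_left_comm]

theorem HasPositiveRadius.exists_truncNorm_le {f : R⟦X⟧} (hf : HasPositiveRadius f) :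
    ∃ C, ∀ᶠ r in 𝓝[>] (0 : ℝ), ∀ N, truncNorm r N f ≤ C := by
  obtain ⟨ρ, hρ, hsum⟩ := hf
  refine ⟨∑' n, ‖coeff n f‖ * ρ ^ n, ?_⟩
  filter_upwards [Ioo_mem_nhdsGT hρ] with r hr N
  calc truncNorm r N f ≤ ∑ n ∈ range N, ‖coeff n f‖ * ρ ^ n := by
        have := hr.1.le
        have := hr.2.le
        unfold truncNorm
        gcongr
    _ ≤ _ := hsum.sum_le_tsum _ fun _ _ => by positivity

theorem HasPositiveRadius.of_truncNorm_le {f : R⟦X⟧} (hr : 0 < r) {C : ℝ}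
    (h : ∀ N, truncNorm r N f ≤ C) : HasPositiveRadius f :=
  ⟨r, hr, summable_of_sum_range_le (fun _ => by positivity) h⟩

theorem HasPositiveRadius.shift {f : R⟦X⟧} (hf : HasPositiveRadius f) :
    HasPositiveRadius (mk fun n => coeff (n + 1) f) := by
  obtain ⟨r, hr, hsum⟩ := hf
  refine ⟨r, hr, ((summable_nat_add_iff 1).2 hsum).mul_left r⁻¹ |>.congr fun n => ?_⟩
  rw [coeff_mk]
  field_simp
  ring

theorem exists_truncNorm_sum_mul_pow_le [NormOneClass R] {s : Finset ℕ} {G : ℕ → R⟦X⟧}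
    (hG : ∀ j ∈ s, HasPositiveRadius (G j)) (M : ℝ) :
    ∃ C, ∀ᶠ r in 𝓝[>] (0 : ℝ), ∀ N f, truncNorm r N f ≤ M →
      truncNorm r N (∑ j ∈ s, G j * f ^ j) ≤ C := by
  choose! C hC using fun j hj => (hG j hj).exists_truncNorm_le
  refine ⟨∑ j ∈ s, C j * M ^ j, ?_⟩
  filter_upwards [(eventually_all_finset s).2 hC, self_mem_nhdsWithin] with r hCr hr N f hf
  have hr : 0 ≤ r := le_of_lt hr
  refine (truncNorm_sum_le hr N s _).trans (sum_le_sum fun j hj => ?_)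
  calc truncNorm r N (G j * f ^ j) ≤ truncNorm r N (G j) * truncNorm r N f ^ j :=
        (truncNorm_mul_le hr N _ _).trans <| mul_le_mul_of_nonneg_left
          (truncNorm_pow_le hr N f j) (truncNorm_nonneg hr N _)
    _ ≤ C j * M ^ j := mul_le_mul (hCr j hj N)
        (pow_le_pow_left₀ (truncNorm_nonneg hr N f) hf j)
        (pow_nonneg (truncNorm_nonneg hr N f) j) ((truncNorm_nonneg hr N _).trans (hCr j hj N))

end NormedRing

section RCLike

variable {𝕜 : Type*} [RCLike 𝕜]

theorem truncNorm_succ_le_add_truncNorm_derivative {r : ℝ} (hr : 0 ≤ r) (N : ℕ) (f : 𝕜⟦X⟧) :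
    truncNorm r (N + 1) f ≤ ‖constantCoeff f‖ + r * truncNorm r N (d⁄dX 𝕜 f) := by
  rw [truncNorm, sum_range_succ', add_comm, truncNorm, mul_sum]
  simp only [coeff_zero_eq_constantCoeff_apply, pow_zero, mul_one]
  refine add_le_add_right (sum_le_sum fun n _ => ?_) _
  rw [coeff_derivative, norm_mul, pow_succ', mul_left_comm]
  gcongr
  refine le_mul_of_one_le_right (norm_nonneg _) ?_
  rw [← Nat.cast_succ, RCLike.norm_natCast]
  exact_mod_cast n.succ_pos

theorem exists_norm_inv_natCast_add_le (q : 𝕜) : ∃ M, ∀ n : ℕ, ‖((n : 𝕜) + q)⁻¹‖ ≤ M := by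
  have hlim : Tendsto (fun n : ℕ => ((n : 𝕜) + q)⁻¹) atTop (𝓝 0) :=
    tendsto_inv₀_cobounded.comp <|
      (tendsto_add_const_cobounded q).comp tendsto_natCast_atTop_cobounded
  obtain ⟨M, hM⟩ := (Metric.isBounded_range_of_tendsto _ hlim).exists_norm_le
  exact ⟨M, fun n => hM _ (mem_range_self n)⟩

theorem mul_truncNorm_derivative_le_one {Q f g : 𝕜⟦X⟧} {r M A B : ℝ} (hr : 0 ≤ r)
    (hM : ∀ n : ℕ, ‖((n : 𝕜) + constantCoeff Q)⁻¹‖ ≤ M)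
    (hf : ∀ n : ℕ, coeff n (d⁄dX 𝕜 f) =
      (n + constantCoeff Q)⁻¹ * coeff n (g - (mk fun k => coeff (k + 1) Q) * (X * d⁄dX 𝕜 f)))
    (hA : ∀ N, truncNorm r N f ≤ ‖constantCoeff f‖ + 1 → truncNorm r N g ≤ A)
    (hB : ∀ N, truncNorm r N (mk fun k => coeff (k + 1) Q) ≤ B)
    (hsmall : r * (M * (A + B)) ≤ 1) (N : ℕ) :
    r * truncNorm r N (d⁄dX 𝕜 f) ≤ 1 := by
  induction N with
  | zero => simp [truncNorm]
  | succ N ih =>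
    have hg : truncNorm r (N + 1) g ≤ A :=
      hA (N + 1) <| (truncNorm_succ_le_add_truncNorm_derivative hr N f).trans (by gcongr)
    have hlin : truncNorm r (N + 1) ((mk fun k => coeff (k + 1) Q) * (X * d⁄dX 𝕜 f)) ≤ B := by
      refine (truncNorm_mul_le hr _ _ _).trans ?_
      rw [truncNorm_succ_X_mul]
      exact (mul_le_of_le_one_right (truncNorm_nonneg hr _ _) ih).trans (hB _)
    have hM0 : 0 ≤ M := (norm_nonneg _).trans (hM 0)
    calc r * truncNorm r (N + 1) (d⁄dX 𝕜 f)
        ≤ r * (M * truncNorm r (N + 1) (g - (mk fun k => coeff (k + 1) Q) * (X * d⁄dX 𝕜 f))) := by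
          gcongr
          exact truncNorm_le_mul_of_coeff_eq_mul hr hM hf _
      _ ≤ r * (M * (A + B)) := by
          gcongr
          exact (truncNorm_sub_le hr _ _ _).trans (add_le_add hg hlin)
      _ ≤ 1 := hsmall

theorem HasPositiveRadius.of_regularSingular_solution {Q f : 𝕜⟦X⟧}
    (hQ₀ : ∀ n : ℕ, (n : 𝕜) + constantCoeff Q ≠ 0) {s : Finset ℕ} {G : ℕ → 𝕜⟦X⟧}
    (hQ : HasPositiveRadius Q) (hG : ∀ j ∈ s, HasPositiveRadius (G j))
    (hf : X * d⁄dX 𝕜 (d⁄dX 𝕜 f) + Q * d⁄dX 𝕜 f = ∑ j ∈ s, G j * f ^ j) :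
    HasPositiveRadius f := by
  obtain ⟨M, hM⟩ := exists_norm_inv_natCast_add_le (constantCoeff Q)
  obtain ⟨A, hA⟩ := exists_truncNorm_sum_mul_pow_le hG (‖constantCoeff f‖ + 1)
  obtain ⟨B, hB⟩ := hQ.shift.exists_truncNorm_le
  have hsmall : ∀ᶠ r in 𝓝[>] (0 : ℝ), r * (M * (A + B)) < 1 :=
    nhdsWithin_le_nhds <|
      ((continuous_mul_const _).tendsto' 0 0 (zero_mul _)).eventually_lt_const one_pos
  obtain ⟨r, hAr, hBr, hr1, hr⟩ := (hA.and (hB.and (hsmall.and self_mem_nhdsWithin))).exists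
  have hr0 : 0 ≤ r := le_of_lt hr
  have hrec (n : ℕ) := (eq_inv_mul_iff_mul_eq₀ (hQ₀ n)).2
    (X_mul_derivative_derivative_add_eq_iff.1 hf n)
  have hderiv := mul_truncNorm_derivative_le_one hr0 hM hrec (fun N => hAr N f) hBr hr1.le
  refine .of_truncNorm_le hr (C := ‖constantCoeff f‖ + 1) fun N => ?_
  calc truncNorm r N f ≤ truncNorm r (N + 1) f :=
        sum_le_sum_of_subset_of_nonneg (range_subset_range.2 N.le_succ) fun _ _ _ => by positivity
    _ ≤ ‖constantCoeff f‖ + r * truncNorm r N (d⁄dX 𝕜 f) :=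
        truncNorm_succ_le_add_truncNorm_derivative hr0 N f
    _ ≤ ‖constantCoeff f‖ + 1 := by gcongr; exact hderiv N

end RCLike

end Norm

section Taylor

variable {𝕜 : Type*} [NontriviallyNormedField 𝕜] {f g : 𝕜 → 𝕜} {c : 𝕜}

/-- The Taylor series of `f` at `c`, as a formal power series in the increment `X = x - c`.
On germs of analytic functions it is an injective homomorphism of differential rings, which
transfers differential equations between functions and formal power series. -/
noncomputable def taylorSeries (f : 𝕜 → 𝕜) (c : 𝕜) : 𝕜⟦X⟧ :=
  mk fun n => iteratedDeriv n f c / n.factorial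

@[simp]
theorem constantCoeff_taylorSeries (f : 𝕜 → 𝕜) (c : 𝕜) :
    constantCoeff (taylorSeries f c) = f c := by
  simp [taylorSeries, ← coeff_zero_eq_constantCoeff_apply]

theorem taylorSeries_const (a c : 𝕜) : taylorSeries (fun _ => a) c = C a := by
  ext (_ | n) <;> simp [taylorSeries, iteratedDeriv_const, coeff_C]

theorem taylorSeries_add [CompleteSpace 𝕜] (hf : AnalyticAt 𝕜 f c) (hg : AnalyticAt 𝕜 g c) :
    taylorSeries (fun x => f x + g x) c = taylorSeries f c + taylorSeries g c := by
  ext n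
  rw [map_add, taylorSeries, taylorSeries, taylorSeries, coeff_mk, coeff_mk, coeff_mk, ← add_div,
    iteratedDeriv_fun_add hf.contDiffAt hg.contDiffAt]

theorem taylorSeries_sum [CompleteSpace 𝕜] {ι : Type*} {s : Finset ι} {f : ι → 𝕜 → 𝕜}
    (hf : ∀ i ∈ s, AnalyticAt 𝕜 (f i) c) :
    taylorSeries (fun x => ∑ i ∈ s, f i x) c = ∑ i ∈ s, taylorSeries (f i) c := by
  ext n
  rw [map_sum]
  simp only [taylorSeries, coeff_mk]
  rw [iteratedDeriv_fun_sum fun i hi => (hf i hi).contDiffAt, sum_div]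

variable [CharZero 𝕜]

theorem taylorSeries_deriv (f : 𝕜 → 𝕜) (c : 𝕜) :
    taylorSeries (deriv f) c = d⁄dX 𝕜 (taylorSeries f c) := by
  ext n
  have hn : (n : 𝕜) + 1 ≠ 0 := n.cast_add_one_ne_zero
  have hfac : (n.factorial : 𝕜) ≠ 0 := Nat.cast_ne_zero.2 n.factorial_ne_zero
  rw [coeff_derivative, taylorSeries, taylorSeries, coeff_mk, coeff_mk, iteratedDeriv_succ',
    Nat.factorial_succ]
  push_cast
  field_simp

theorem taylorSeries_sub_const_self (c : 𝕜) : taylorSeries (fun x => x - c) c = X := by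
  apply derivative.ext
  · rw [← taylorSeries_deriv, derivative_X, deriv_sub_const_fun]
    simp [taylorSeries_const]
  · simp

variable [CompleteSpace 𝕜]

theorem taylorSeries_mul (hf : AnalyticAt 𝕜 f c) (hg : AnalyticAt 𝕜 g c) :
    taylorSeries (fun x => f x * g x) c = taylorSeries f c * taylorSeries g c := by
  ext n
  rw [coeff_mul, Finset.Nat.sum_antidiagonal_eq_sum_range_succ
    fun i j => coeff i (taylorSeries f c) * coeff j (taylorSeries g c)]
  simp only [taylorSeries, coeff_mk]
  rw [iteratedDeriv_fun_mul hf.contDiffAt hg.contDiffAt, sum_div]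
  refine sum_congr rfl fun i hi => ?_
  have hfac (k : ℕ) : (k.factorial : 𝕜) ≠ 0 := Nat.cast_ne_zero.2 k.factorial_ne_zero
  rw [Nat.cast_choose 𝕜 (Nat.lt_succ_iff.1 (mem_range.1 hi))]
  field_simp [hfac]

theorem taylorSeries_pow (hf : AnalyticAt 𝕜 f c) (j : ℕ) :
    taylorSeries (fun x => f x ^ j) c = taylorSeries f c ^ j := by
  induction j with
  | zero => simp [taylorSeries_const]
  | succ j ih => simp only [pow_succ, taylorSeries_mul (hf.fun_pow j) hf, ih]

theorem eventuallyEq_of_taylorSeries_eq (hf : AnalyticAt 𝕜 f c) (hg : AnalyticAt 𝕜 g c)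
    (h : taylorSeries f c = taylorSeries g c) : f =ᶠ[𝓝 c] g := by
  have hcoeff (n : ℕ) : iteratedDeriv n f c / n.factorial = iteratedDeriv n g c / n.factorial := by
    simpa only [taylorSeries, coeff_mk] using congrArg (coeff n) h
  have hf' := hf.hasFPowerSeriesAt
  simp only [hcoeff] at hf'
  have hsub := hf'.sub hg.hasFPowerSeriesAt
  rw [sub_self] at hsub
  exact hsub.eventually_eq_zero.mono fun x hx => sub_eq_zero.1 hx

theorem hasPositiveRadius_taylorSeries (hf : AnalyticAt 𝕜 f c) :
    HasPositiveRadius (taylorSeries f c) := by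
  obtain ⟨r, hr, hlt⟩ := ENNReal.lt_iff_exists_nnreal_btwn.1 hf.hasFPowerSeriesAt.radius_pos
  refine ⟨r, by exact_mod_cast hr, ?_⟩
  simpa [taylorSeries, FormalMultilinearSeries.ofScalars_norm] using
    FormalMultilinearSeries.summable_norm_mul_pow _ hlt

theorem HasPositiveRadius.exists_taylorSeries_eq {a : 𝕜⟦X⟧} (ha : HasPositiveRadius a) (c : 𝕜) :
    ∃ u : 𝕜 → 𝕜, AnalyticAt 𝕜 u c ∧ taylorSeries u c = a := by
  obtain ⟨r, hr, hsum⟩ := ha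
  set p := FormalMultilinearSeries.ofScalars 𝕜 fun n => coeff n a
  have hradius : 0 < p.radius := by
    refine lt_of_lt_of_le (by simpa using hr)
      (p.le_radius_of_summable_norm (r := r.toNNReal) ?_)
    simpa [p, FormalMultilinearSeries.ofScalars_norm, hr.le] using hsum
  have hu : HasFPowerSeriesAt (fun x => p.sum (x - c)) p c := by
    simpa using ((p.hasFPowerSeriesOnBall hradius).comp_sub c).hasFPowerSeriesAt
  refine ⟨_, hu.analyticAt, ?_⟩
  ext n
  have := hu.analyticAt.hasFPowerSeriesAt.eq_formalMultilinearSeries hu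
  simpa [taylorSeries] using
    congrFun (FormalMultilinearSeries.ofScalars_series_injective 𝕜 𝕜 this) n

end Taylor

theorem exists_analyticAt_regularSingular_solution {𝕜 : Type*} [RCLike 𝕜] {c : 𝕜} {q : 𝕜 → 𝕜}
    (hq : AnalyticAt 𝕜 q c) (hqc : ∀ n : ℕ, (n : 𝕜) + q c ≠ 0) {s : Finset ℕ} {g : ℕ → 𝕜 → 𝕜}
    (hg : ∀ j ∈ s, AnalyticAt 𝕜 (g j) c) (b : 𝕜) :
    ∃ u : 𝕜 → 𝕜, AnalyticAt 𝕜 u c ∧ u c = b ∧ ∀ᶠ x in 𝓝 c,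
      (x - c) * deriv (deriv u) x + q x * deriv u x = ∑ j ∈ s, g j x * u x ^ j := by
  have hQ₀ (n : ℕ) : (n : 𝕜) + constantCoeff (taylorSeries q c) ≠ 0 := by simpa using hqc n
  obtain ⟨f, hfb, hf⟩ :=
    exists_powerSeries_regularSingular_solution hQ₀ s (fun j => taylorSeries (g j) c) b
  have hradius : HasPositiveRadius f :=
    .of_regularSingular_solution hQ₀ (hasPositiveRadius_taylorSeries hq)
      (fun j hj => hasPositiveRadius_taylorSeries (hg j hj)) hf
  obtain ⟨u, hu, rfl⟩ := hradius.exists_taylorSeries_eq c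
  refine ⟨u, hu, by simpa using hfb, ?_⟩
  have hsub : AnalyticAt 𝕜 (fun x => x - c) c := by fun_prop
  have hterm (j : ℕ) (hj : j ∈ s) : AnalyticAt 𝕜 (fun x => g j x * u x ^ j) c :=
    (hg j hj).fun_mul (hu.fun_pow j)
  refine eventuallyEq_of_taylorSeries_eq
    ((hsub.fun_mul hu.deriv.deriv).fun_add (hq.fun_mul hu.deriv))
    (s.analyticAt_fun_sum hterm) ?_
  rw [taylorSeries_add (hsub.fun_mul hu.deriv.deriv) (hq.fun_mul hu.deriv),
    taylorSeries_mul hsub hu.deriv.deriv, taylorSeries_mul hq hu.deriv, taylorSeries_sum hterm,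
    taylorSeries_sub_const_self, taylorSeries_deriv, taylorSeries_deriv, hf]
  refine sum_congr rfl fun j hj => ?_
  rw [taylorSeries_mul (hg j hj) (hu.fun_pow j), taylorSeries_pow hu]

section Profile

variable {p : ℕ} {u : ℝ → ℝ}

theorem alphaP_pos (hp : 1 < p) : 0 < alphaP p :=
  div_pos two_pos (sub_pos.2 (Nat.one_lt_cast.2 hp))

theorem profileEq_iff (hp : p ≠ 1) {ρ : ℝ} (hρ : 0 < ρ) :
    ProfileEq p u ρ ↔
      (ρ - 1) * deriv (deriv u) ρ
          + ((2 + 2 * alphaP p) * ρ - 2 / ρ) / (1 + ρ) * deriv u ρ =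
        ∑ j ∈ {1, p},
          (if j = 1 then -(alphaP p * (alphaP p + 1)) else 1) / (1 + ρ) * u ρ ^ j := by
  have hρ1 : 1 + ρ ≠ 0 := by positivity
  have hresidual :
      (1 - ρ ^ 2) * deriv (deriv u) ρ + (2 / ρ - (2 + 2 * alphaP p) * ρ) * deriv u ρ
          - alphaP p * (alphaP p + 1) * u ρ + u ρ ^ p =
        -(1 + ρ) * ((ρ - 1) * deriv (deriv u) ρ
            + ((2 + 2 * alphaP p) * ρ - 2 / ρ) / (1 + ρ) * deriv u ρ
          - (-(alphaP p * (alphaP p + 1)) / (1 + ρ) * u ρ + 1 / (1 + ρ) * u ρ ^ p)) := by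
    field_simp
    ring
  rw [ProfileEq, sum_pair hp.symm, if_pos rfl, if_neg hp, pow_one, hresidual, mul_eq_zero,
    or_iff_right (neg_ne_zero.2 hρ1), sub_eq_zero]

theorem exists_profileEq_analyticAt_one (hp : 1 < p) (b : ℝ) :
    ∃ u : ℝ → ℝ, AnalyticAt ℝ u 1 ∧ u 1 = b ∧ ∀ᶠ ρ in 𝓝 1, ProfileEq p u ρ := by
  set q : ℝ → ℝ := fun ρ => ((2 + 2 * alphaP p) * ρ - 2 / ρ) / (1 + ρ) with hq_def
  have hq : AnalyticAt ℝ q 1 := by fun_prop (disch := norm_num)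
  have hq1 : q 1 = alphaP p := by rw [hq_def]; ring
  have hindex (n : ℕ) : (n : ℝ) + q 1 ≠ 0 := by
    have := alphaP_pos hp
    rw [hq1]
    positivity
  obtain ⟨u, hu, hub, hode⟩ := exists_analyticAt_regularSingular_solution hq hindex (s := {1, p})
    (g := fun j ρ => (if j = 1 then -(alphaP p * (alphaP p + 1)) else 1) / (1 + ρ))
    (fun j _ => by fun_prop (disch := norm_num)) b
  refine ⟨u, hu, hub, ?_⟩
  filter_upwards [hode, lt_mem_nhds one_pos] with ρ hρ hpos
  exact (profileEq_iff hp.ne' hpos).2 hρ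

theorem profileEq_one_of_eventually (hu : ContDiffAt ℝ 2 u 1)
    (h : ∀ᶠ ρ in 𝓝[≠] 1, ProfileEq p u ρ) : ProfileEq p u 1 := by
  have hu₁ : ContDiffAt ℝ 1 (deriv u) 1 := hu.derivWithin (by norm_num)
  have hu₂ : ContDiffAt ℝ 0 (deriv (deriv u)) 1 := hu₁.derivWithin (by norm_num)
  have hcont : ContinuousAt (fun ρ => (1 - ρ ^ 2) * deriv (deriv u) ρ
      + (2 / ρ - (2 + 2 * alphaP p) * ρ) * deriv u ρ
      - alphaP p * (alphaP p + 1) * u ρ + u ρ ^ p) 1 := by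
    have := hu.continuousAt
    have := hu₁.continuousAt
    have := hu₂.continuousAt
    fun_prop (disch := norm_num)
  exact tendsto_nhds_unique (hcont.tendsto.mono_left nhdsWithin_le_nhds)
    (tendsto_const_nhds.congr' (h.mono fun ρ hρ => hρ.symm))

theorem ProfileEq.deriv_one (hp : p ≠ 1) (h : ProfileEq p u 1) :
    deriv u 1 = ((p : ℝ) - 1) * u 1 ^ p / 4 - ((p : ℝ) + 1) * u 1 / (2 * ((p : ℝ) - 1)) := by
  have hp1 : (p : ℝ) - 1 ≠ 0 := sub_ne_zero.2 (Nat.cast_ne_one.2 hp)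
  simp only [ProfileEq, alphaP] at h
  field_simp at h ⊢
  linarith

end Profile

theorem local_existence_at_one_general {p : ℕ} (hp : 1 < p) (b : ℝ) :
    (∃ ε : ℝ, 0 < ε ∧ ∃ u : ℝ → ℝ, AnalyticOnNhd ℝ u (Ioo (1 - ε) (1 + ε)) ∧
      u 1 = b ∧
      (∀ ρ ∈ Ioo (1 - ε) (1 + ε), ProfileEq p u ρ)) ∧
    (∀ u : ℝ → ℝ, ContDiffAt ℝ 2 u 1 →
      (∃ ε : ℝ, 0 < ε ∧ ∀ ρ ∈ Ioo (1 - ε) (1 + ε), ρ ≠ 1 → ProfileEq p u ρ) →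
      deriv u 1 = ((p : ℝ) - 1) * u 1 ^ p / 4 - ((p : ℝ) + 1) * u 1 / (2 * ((p : ℝ) - 1))) := by
  refine ⟨?_, ?_⟩
  · obtain ⟨u, hu, hub, heq⟩ := exists_profileEq_analyticAt_one hp b
    obtain ⟨ε, hε, hball⟩ := Metric.eventually_nhds_iff_ball.1 (hu.eventually_analyticAt.and heq)
    rw [Real.ball_eq_Ioo] at hball
    exact ⟨ε, hε, u, fun ρ hρ => (hball ρ hρ).1, hub, fun ρ hρ => (hball ρ hρ).2⟩
  · rintro u hu ⟨ε, hε, heq⟩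
    have hnear : Ioo (1 - ε) (1 + ε) ∈ 𝓝 (1 : ℝ) := Ioo_mem_nhds (by linarith) (by linarith)
    have hpunct : ∀ᶠ ρ in 𝓝[≠] 1, ProfileEq p u ρ := by
      filter_upwards [nhdsWithin_le_nhds hnear, self_mem_nhdsWithin] with ρ hρ hne
      exact heq ρ hρ hne
    exact (profileEq_one_of_eventually hu hpunct).deriv_one hp.ne'

/-- For each `b` there is a solution of the profile equation,
real-analytic on a neighborhood of `ρ = 1`, with `u(1) = b`; and every solution
real-analytic at `ρ = 1` has `u'(1) = (p-1)u(1)^p/4 - (p+1)u(1)/(2(p-1))`. -/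
theorem local_existence_at_one (p : ℕ) (hp_odd : Odd p) (hp : 7 ≤ p) (b : ℝ) :
    (∃ ε : ℝ, 0 < ε ∧ ∃ u : ℝ → ℝ, AnalyticOnNhd ℝ u (Ioo (1 - ε) (1 + ε)) ∧
      u 1 = b ∧
      (∀ ρ ∈ Ioo (1 - ε) (1 + ε), ρ ≠ 1 → ProfileEq p u ρ)) ∧
    (∀ u : ℝ → ℝ, AnalyticAt ℝ u 1 →
      (∃ ε : ℝ, 0 < ε ∧ ∀ ρ ∈ Ioo (1 - ε) (1 + ε), ρ ≠ 1 → ProfileEq p u ρ) →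
      deriv u 1 = ((p : ℝ) - 1) * u 1 ^ p / 4 - ((p : ℝ) + 1) * u 1 / (2 * ((p : ℝ) - 1))) := by
  obtain ⟨⟨ε, hε, u, hu, hub, heq⟩, hderiv⟩ := local_existence_at_one_general (p := p) (by lia) b
  exact ⟨⟨ε, hε, u, hu, hub, fun ρ hρ _ => heq ρ hρ⟩, fun u hu => hderiv u hu.contDiffAt⟩
end

section
/- Let p ≥ 7 be an odd integer and let u be twice differentiable on (0,1) and satisfy the self-similar profile equation (1−ρ²)u''(ρ) + (2/ρ − (2+2α)ρ)u'(ρ) − α(α+1)u(ρ) + u(ρ)^p = 0 for all ρ ∈ (0,1). Define H(ρ) = (1−ρ²)u'(ρ)²/2 + u(ρ)^{p+1}/(p+1) − (p+1)u(ρ)²/(p−1)². Then H'(ρ) = ((p+3)ρ/(p−1) − 2/ρ)·u'(ρ)² for all ρ ∈ (0,1); in particular H'(ρ) ≤ 0 on (0,1), so H is nonincreasing there. Moreover H(ρ) ≥ −(1/(p−1))·(2(p+1)/(p−1)²)^{2/(p−1)} for every ρ ∈ (0,1). -/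
open Set Real Filter

/-- The Lyapunov function `H = (1-ρ²)u'²/2 + u^(p+1)/(p+1) - (p+1)u²/(p-1)²`. -/
noncomputable def lyapunovH (p : ℕ) (u : ℝ → ℝ) (ρ : ℝ) : ℝ :=
  (1 - ρ ^ 2) * (deriv u ρ) ^ 2 / 2 + u ρ ^ (p + 1) / ((p : ℝ) + 1)
    - ((p : ℝ) + 1) * (u ρ) ^ 2 / ((p : ℝ) - 1) ^ 2

/-!
Writing `H = (1 - ρ²)u'²/2 + V(u)` with `V'(x) = x^p - α(α+1)x`, the profile equation cancels the
terms in `u''` and `V'(u)` from `H'` and leaves `((1 + 2α)ρ - 2/ρ)u'²`. On `(0,1)` the bracket is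
nonpositive as soon as `1 + 2α ≤ 2`, that is `p ≥ 5`. For the lower bound, drop the kinetic term;
since `b₀^(p-1) = α(α+1)`, weighted AM-GM between `x^(p+1)` and `b₀^(p+1)` says exactly that `V` is
minimal at `b₀`.
-/

theorem add_mul_pow_mul_pow_le {a b : ℝ} (ha : 0 ≤ a) (hb : 0 ≤ b) (j k : ℕ) :
    ((j : ℝ) + k) * (a ^ j * b ^ k) ≤ j * a ^ (j + k) + k * b ^ (j + k) := by
  rcases (j + k).eq_zero_or_pos with hzero | hpos
  · obtain ⟨rfl, rfl⟩ := Nat.add_eq_zero_iff.mp hzero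
    simp
  have hjk : (0 : ℝ) < j + k := mod_cast hpos
  have pow_rpow_div {x : ℝ} (hx : 0 ≤ x) (i : ℕ) :
      (x ^ (j + k)) ^ ((i : ℝ) / (j + k)) = x ^ i := by
    rw [← rpow_natCast, ← rpow_mul hx, Nat.cast_add, mul_div_cancel₀ _ hjk.ne', rpow_natCast]
  have amgm := geom_mean_le_arith_mean2_weighted
    (by positivity : (0 : ℝ) ≤ j / (j + k)) (by positivity : (0 : ℝ) ≤ k / (j + k))
    (pow_nonneg ha (j + k)) (pow_nonneg hb (j + k)) (by field_simp)
  rw [pow_rpow_div ha, pow_rpow_div hb] at amgm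
  calc ((j : ℝ) + k) * (a ^ j * b ^ k)
      ≤ (j + k) * (j / (j + k) * a ^ (j + k) + k / (j + k) * b ^ (j + k)) := by gcongr
    _ = j * a ^ (j + k) + k * b ^ (j + k) := by field_simp

theorem hasDerivAt_one_sub_sq_mul_deriv_sq_add_comp {u V : ℝ → ℝ} {ρ V' : ℝ}
    (hu : DifferentiableAt ℝ u ρ) (hu' : DifferentiableAt ℝ (deriv u) ρ)
    (hV : HasDerivAt V V' (u ρ)) :
    HasDerivAt (fun r ↦ (1 - r ^ 2) * deriv u r ^ 2 / 2 + V (u r))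
      (((1 - ρ ^ 2) * deriv (deriv u) ρ - ρ * deriv u ρ + V') * deriv u ρ) ρ := by
  have hweight : HasDerivAt (fun r : ℝ ↦ 1 - r ^ 2) (-(2 * ρ)) ρ := by
    simpa using (hasDerivAt_pow 2 ρ).const_sub 1
  have hkinetic := (hweight.mul (hu'.hasDerivAt.pow 2)).div_const 2
  refine (hkinetic.add (hV.comp ρ hu.hasDerivAt)).congr_deriv ?_
  simp only [Pi.pow_apply]
  ring

theorem add_three_mul_div_sub_two_div_nonpos {q ρ : ℝ} (hq : 5 ≤ q) (hρ : ρ ∈ Ioc (0 : ℝ) 1) :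
    (q + 3) * ρ / (q - 1) - 2 / ρ ≤ 0 := by
  have hleft : (q + 3) * ρ / (q - 1) ≤ 2 := by
    rw [div_le_iff₀ (by linarith)]
    nlinarith [hρ.1, hρ.2]
  have hright : 2 ≤ 2 / ρ := (le_div_iff₀ hρ.1).mpr (by linarith [hρ.2])
  linarith

theorem bZero_nonneg (p : ℕ) : 0 ≤ bZero p :=
  rpow_nonneg (by positivity) _

theorem bZero_sq (p : ℕ) :
    bZero p ^ 2 = (2 * ((p : ℝ) + 1) / ((p : ℝ) - 1) ^ 2) ^ ((2 : ℝ) / ((p : ℝ) - 1)) := by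
  rw [bZero, ← rpow_mul_natCast (by positivity), Nat.cast_two, div_mul_eq_mul_div, one_mul]

theorem bZero_pow_sub_one {p : ℕ} (hp : 1 < p) :
    bZero p ^ (p - 1) = 2 * ((p : ℝ) + 1) / ((p : ℝ) - 1) ^ 2 := by
  rw [bZero, one_div, ← Nat.cast_pred (by lia : 0 < p)]
  exact rpow_inv_natCast_pow (by positivity) (by lia)

theorem bZero_pow_add_one {p : ℕ} (hp : 1 < p) :
    bZero p ^ (p + 1) = 2 * ((p : ℝ) + 1) / ((p : ℝ) - 1) ^ 2 * bZero p ^ 2 := by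
  rw [← bZero_pow_sub_one hp, ← pow_add, (by lia : p - 1 + 2 = p + 1)]

theorem alphaP_mul_alphaP_add_one {p : ℕ} (hp : p ≠ 1) :
    alphaP p * (alphaP p + 1) = 2 * ((p : ℝ) + 1) / ((p : ℝ) - 1) ^ 2 := by
  have hp' : (p : ℝ) - 1 ≠ 0 := sub_ne_zero.mpr (mod_cast hp)
  unfold alphaP
  field_simp
  ring

theorem one_add_two_mul_alphaP {p : ℕ} (hp : p ≠ 1) :
    1 + 2 * alphaP p = ((p : ℝ) + 3) / ((p : ℝ) - 1) := by
  have hp' : (p : ℝ) - 1 ≠ 0 := sub_ne_zero.mpr (mod_cast hp)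
  unfold alphaP
  field_simp
  ring

/-- The potential energy in `lyapunovH`: a primitive of the zeroth-order terms
`x^p - α(α+1)x` of the profile equation, written with `α(α+1)/2 = (p+1)/(p-1)²`. -/
noncomputable def profilePotential (p : ℕ) (x : ℝ) : ℝ :=
  x ^ (p + 1) / ((p : ℝ) + 1) - ((p : ℝ) + 1) * x ^ 2 / ((p : ℝ) - 1) ^ 2

theorem lyapunovH_eq_add_profilePotential (p : ℕ) (u : ℝ → ℝ) (ρ : ℝ) :
    lyapunovH p u ρ = (1 - ρ ^ 2) * deriv u ρ ^ 2 / 2 + profilePotential p (u ρ) :=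
  add_sub_assoc _ _ _

theorem hasDerivAt_profilePotential {p : ℕ} (hp : p ≠ 1) (x : ℝ) :
    HasDerivAt (profilePotential p) (x ^ p - alphaP p * (alphaP p + 1) * x) x := by
  have hpow := (hasDerivAt_pow (p + 1) x).div_const ((p : ℝ) + 1)
  have hsq := ((hasDerivAt_pow 2 x).const_mul ((p : ℝ) + 1)).div_const (((p : ℝ) - 1) ^ 2)
  refine (hpow.sub hsq).congr_deriv ?_
  rw [alphaP_mul_alphaP_add_one hp, Nat.add_sub_cancel]
  push_cast
  field_simp

theorem profilePotential_bZero {p : ℕ} (hp : 1 < p) :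
    profilePotential p (bZero p) = -(1 / ((p : ℝ) - 1)) * bZero p ^ 2 := by
  have hp' : (p : ℝ) - 1 ≠ 0 := sub_ne_zero.mpr (mod_cast hp.ne')
  rw [profilePotential, bZero_pow_add_one hp]
  field_simp
  ring

theorem profilePotential_abs {p : ℕ} (hp : Odd p) (x : ℝ) :
    profilePotential p |x| = profilePotential p x := by
  rw [profilePotential, hp.add_one.pow_abs, sq_abs, profilePotential]

theorem profilePotential_bZero_le {p : ℕ} (hp : 1 < p) {x : ℝ} (hx : 0 ≤ x) :
    profilePotential p (bZero p) ≤ profilePotential p x := by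
  have hp' : (p : ℝ) - 1 ≠ 0 := sub_ne_zero.mpr (mod_cast hp.ne')
  have young : (2 + ((p : ℝ) - 1)) * (x ^ 2 * bZero p ^ (p - 1))
      ≤ 2 * x ^ (p + 1) + ((p : ℝ) - 1) * bZero p ^ (p + 1) := by
    have amgm := add_mul_pow_mul_pow_le hx (bZero_nonneg p) 2 (p - 1)
    rwa [Nat.cast_two, Nat.cast_pred (by lia), (by lia : 2 + (p - 1) = p + 1)] at amgm
  rw [bZero_pow_sub_one hp, bZero_pow_add_one hp] at young
  rw [profilePotential_bZero hp, profilePotential, ← sub_nonneg]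
  calc 0 ≤ (2 * x ^ (p + 1) + ((p : ℝ) - 1) * (2 * (p + 1) / (p - 1) ^ 2 * bZero p ^ 2)
        - (2 + (p - 1)) * (x ^ 2 * (2 * (p + 1) / (p - 1) ^ 2))) / (2 * (p + 1)) :=
        div_nonneg (sub_nonneg.mpr young) (by positivity)
    _ = _ := by
      field_simp
      ring

theorem hasDerivAt_lyapunovH {p : ℕ} (hp : p ≠ 1) {u : ℝ → ℝ} {ρ : ℝ}
    (hu : DifferentiableAt ℝ u ρ) (hu' : DifferentiableAt ℝ (deriv u) ρ)
    (heq : ProfileEq p u ρ) :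
    HasDerivAt (lyapunovH p u)
      ((((p : ℝ) + 3) * ρ / ((p : ℝ) - 1) - 2 / ρ) * deriv u ρ ^ 2) ρ := by
  rw [funext (lyapunovH_eq_add_profilePotential p u), mul_div_right_comm,
    ← one_add_two_mul_alphaP hp]
  refine (hasDerivAt_one_sub_sq_mul_deriv_sq_add_comp hu hu'
    (hasDerivAt_profilePotential hp (u ρ))).congr_deriv ?_
  unfold ProfileEq at heq
  linear_combination deriv u ρ * heq

theorem profilePotential_bZero_le_lyapunovH {p : ℕ} (hp_odd : Odd p) (hp : 1 < p) (u : ℝ → ℝ)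
    {ρ : ℝ} (hρ : |ρ| ≤ 1) : profilePotential p (bZero p) ≤ lyapunovH p u ρ := by
  have hkinetic : 0 ≤ (1 - ρ ^ 2) * deriv u ρ ^ 2 / 2 := by
    have hweight : 0 ≤ 1 - ρ ^ 2 := sub_nonneg.mpr ((sq_le_one_iff_abs_le_one ρ).mpr hρ)
    positivity
  calc profilePotential p (bZero p)
      ≤ profilePotential p |u ρ| := profilePotential_bZero_le hp (abs_nonneg _)
    _ = profilePotential p (u ρ) := profilePotential_abs hp_odd _
    _ ≤ lyapunovH p u ρ := by
      rw [lyapunovH_eq_add_profilePotential]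
      exact le_add_of_nonneg_left hkinetic

theorem lyapunov_monotone_general (p : ℕ) (hp_odd : Odd p) (hp : 5 ≤ p) (u : ℝ → ℝ)
    (hdiff : ∀ ρ ∈ Ioo (0 : ℝ) 1, DifferentiableAt ℝ u ρ)
    (hdiff2 : ∀ ρ ∈ Ioo (0 : ℝ) 1, DifferentiableAt ℝ (deriv u) ρ)
    (heq : ∀ ρ ∈ Ioo (0 : ℝ) 1, ProfileEq p u ρ) :
    (∀ ρ ∈ Ioo (0 : ℝ) 1,
      deriv (lyapunovH p u) ρ = (((p : ℝ) + 3) * ρ / ((p : ℝ) - 1) - 2 / ρ) * (deriv u ρ) ^ 2 ∧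
      deriv (lyapunovH p u) ρ ≤ 0) ∧
    AntitoneOn (lyapunovH p u) (Ioo 0 1) ∧
    (∀ ρ ∈ Ioo (0 : ℝ) 1,
      -(1 / ((p : ℝ) - 1)) * (2 * ((p : ℝ) + 1) / ((p : ℝ) - 1) ^ 2) ^ ((2 : ℝ) / ((p : ℝ) - 1))
        ≤ lyapunovH p u ρ) := by
  have hderiv : ∀ ρ ∈ Ioo (0 : ℝ) 1, HasDerivAt (lyapunovH p u)
      ((((p : ℝ) + 3) * ρ / ((p : ℝ) - 1) - 2 / ρ) * deriv u ρ ^ 2) ρ := fun ρ hρ ↦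
    hasDerivAt_lyapunovH (by lia) (hdiff ρ hρ) (hdiff2 ρ hρ) (heq ρ hρ)
  have hderiv_nonpos : ∀ ρ ∈ Ioo (0 : ℝ) 1, deriv (lyapunovH p u) ρ ≤ 0 := fun ρ hρ ↦ by
    rw [(hderiv ρ hρ).deriv]
    exact mul_nonpos_of_nonpos_of_nonneg
      (add_three_mul_div_sub_two_div_nonpos (mod_cast hp) (Ioo_subset_Ioc_self hρ)) (sq_nonneg _)
  refine ⟨fun ρ hρ ↦ ⟨(hderiv ρ hρ).deriv, hderiv_nonpos ρ hρ⟩, ?_, fun ρ hρ ↦ ?_⟩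
  · refine antitoneOn_of_deriv_nonpos (convex_Ioo 0 1) (HasDerivAt.continuousOn hderiv) ?_ ?_
    · rw [interior_Ioo]
      exact fun ρ hρ ↦ (hderiv ρ hρ).differentiableAt.differentiableWithinAt
    · rwa [interior_Ioo]
  · rw [← bZero_sq, ← profilePotential_bZero (by lia)]
    exact profilePotential_bZero_le_lyapunovH hp_odd (by lia) u
      (abs_le.mpr ⟨by linarith [hρ.1], hρ.2.le⟩)

/-- `H' = ((p+3)ρ/(p-1) - 2/ρ) u'² ≤ 0` on `(0,1)`, so `H` is
nonincreasing there, and `H ≥ -(1/(p-1))(2(p+1)/(p-1)²)^(2/(p-1))`. -/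
theorem lyapunov_monotone (p : ℕ) (hp_odd : Odd p) (hp : 7 ≤ p) (u : ℝ → ℝ)
    (hdiff : ∀ ρ ∈ Ioo (0 : ℝ) 1, DifferentiableAt ℝ u ρ)
    (hdiff2 : ∀ ρ ∈ Ioo (0 : ℝ) 1, DifferentiableAt ℝ (deriv u) ρ)
    (heq : ∀ ρ ∈ Ioo (0 : ℝ) 1, ProfileEq p u ρ) :
    (∀ ρ ∈ Ioo (0 : ℝ) 1,
      deriv (lyapunovH p u) ρ = (((p : ℝ) + 3) * ρ / ((p : ℝ) - 1) - 2 / ρ) * (deriv u ρ) ^ 2 ∧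
      deriv (lyapunovH p u) ρ ≤ 0) ∧
    AntitoneOn (lyapunovH p u) (Ioo 0 1) ∧
    (∀ ρ ∈ Ioo (0 : ℝ) 1,
      -(1 / ((p : ℝ) - 1)) * (2 * ((p : ℝ) + 1) / ((p : ℝ) - 1) ^ 2) ^ ((2 : ℝ) / ((p : ℝ) - 1))
        ≤ lyapunovH p u ρ) := by
  exact lyapunov_monotone_general p hp_odd (by lia) u hdiff hdiff2 heq
end
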